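/- Let X and Y be real-valued random variables on a common probability space with 0 < Var(X) < ∞, Y Gaussian with Var(Y) > 0, and ρ(X,Y) ≠ 0, and let N be a standard Gaussian random variable on the same space independent of (X,Y). Then for every ε ∈ [0, ρ_m(X,Y)²]: 1 − ε/ρ(X,Y)² ≤ sENSR(ε) ≤ 1 − ε/ρ_m(X,Y)². -/

import Mathlib

open MeasureTheory ProbabilityTheory

variable {Ω : Type*} [MeasurableSpace Ω]

/-- `mmse(W|V) = E[(W − E[W|V])²]`: the minimum mean squared error of estimating `W`
from `V` (conditional expectation taken w.r.t. the σ-algebra generated by `V`). -/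
noncomputable def mmse (μ : Measure Ω) (W V : Ω → ℝ) : ℝ :=
  ∫ ω, (W ω - (μ[W | MeasurableSpace.comap V Real.measurableSpace]) ω) ^ 2 ∂μ

/-- The Pearson correlation coefficient `ρ(U,V)`. -/
noncomputable def corr (μ : Measure Ω) (U V : Ω → ℝ) : ℝ :=
  (∫ ω, (U ω - ∫ x, U x ∂μ) * (V ω - ∫ x, V x ∂μ) ∂μ) /
    (Real.sqrt (variance U μ) * Real.sqrt (variance V μ))

/-- `f ∈ S_U`: `f` is Borel measurable and `0 < Var(f(U)) < ∞`. -/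
def MemS (μ : Measure Ω) (U : Ω → ℝ) (f : ℝ → ℝ) : Prop :=
  Measurable f ∧ 0 < evariance (f ∘ U) μ ∧ evariance (f ∘ U) μ < ⊤

/-- The Hirschfeld–Gebelein–Rényi maximal correlation
`ρ_m(U,V) = sup{ρ(f(U), g(V)) : f ∈ S_U, g ∈ S_V}` (equal to `0`, the real `sSup` of
the empty set, if `S_U` or `S_V` is empty). -/
noncomputable def maxCorr (μ : Measure Ω) (U V : Ω → ℝ) : ℝ :=
  sSup {c | ∃ f g : ℝ → ℝ, MemS μ U f ∧ MemS μ V g ∧ c = corr μ (f ∘ U) (g ∘ V)}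

/-- The Gaussian perturbation `Z_γ = √γ·Y + N`. -/
noncomputable def Zgamma (Y N : Ω → ℝ) (γ : ℝ) : Ω → ℝ :=
  fun ω => Real.sqrt γ * Y ω + N ω

/-- The strong estimation noise-to-signal ratio
`sENSR(ε) = inf{mmse(Y|Z_γ)/Var(Y) : γ ≥ 0, ρ_m(X,Z_γ)² ≤ ε}`. -/
noncomputable def sENSR (μ : Measure Ω) (X Y N : Ω → ℝ) (ε : ℝ) : ℝ :=
  sInf {r | ∃ γ : ℝ, 0 ≤ γ ∧ maxCorr μ X (Zgamma Y N γ) ^ 2 ≤ ε ∧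
    r = mmse μ Y (Zgamma Y N γ) / variance Y μ}

open scoped NNReal ENNReal

/-- The kernel `c e^{s t u} + (1 - c) - e^{c s t u}` is positive semidefinite for `c ∈ [0, 1]`. -/
lemma exp_kernel_nonneg {ι : Type*} (S : Finset ι) (b t : ι → ℝ) {c s : ℝ}
    (hc0 : 0 ≤ c) (hc1 : c ≤ 1) (hs : 0 ≤ s) :
    0 ≤ ∑ i ∈ S, ∑ j ∈ S, b i * b j *
      (c * Real.exp (s * t i * t j) + (1 - c) - Real.exp (c * s * t i * t j)) := by
  have hexp (x : ℝ) : HasSum (fun n : ℕ => x ^ n / n.factorial) (Real.exp x) := by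
    rw [Real.exp_eq_exp_ℝ]; exact NormedSpace.expSeries_div_hasSum_exp x
  have hterm (i j : ι) : HasSum
      (fun n : ℕ => b i * b j * (c * ((s * t i * t j) ^ n / n.factorial)
        + (if n = 0 then 1 - c else 0) - (c * s * t i * t j) ^ n / n.factorial))
      (b i * b j *
        (c * Real.exp (s * t i * t j) + (1 - c) - Real.exp (c * s * t i * t j))) :=
    ((((hexp _).mul_left c).add (hasSum_ite_eq 0 (1 - c))).sub (hexp _)).mul_left _
  refine (hasSum_sum fun i _ => hasSum_sum fun j _ => hterm i j).nonneg fun n => ?_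
  have hfac : ∑ i ∈ S, ∑ j ∈ S, b i * b j * (c * ((s * t i * t j) ^ n / n.factorial)
        + (if n = 0 then 1 - c else 0) - (c * s * t i * t j) ^ n / n.factorial)
      = (c + (if n = 0 then 1 - c else 0) - c ^ n) * s ^ n / n.factorial
        * (∑ i ∈ S, b i * t i ^ n) ^ 2 := by
    rw [pow_two, Finset.sum_mul_sum, Finset.mul_sum]
    refine Finset.sum_congr rfl fun i _ => ?_
    rw [Finset.mul_sum]
    refine Finset.sum_congr rfl fun j _ => ?_
    rcases eq_or_ne n 0 with rfl | hn
    · simp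
    · simp only [hn, if_false, mul_pow]; ring
  rw [hfac]
  have hcoef : 0 ≤ c + (if n = 0 then 1 - c else 0) - c ^ n := by
    rcases eq_or_ne n 0 with rfl | hn
    · simp
    · simpa [hn] using pow_le_of_le_one hc0 hc1 hn
  positivity

/-- A quadratic inequality for a pair of bounded operators, checked on a total family
of exponential vectors. -/
lemma inner_map_le_of_exponential_family {H K : Type*}
    [NormedAddCommGroup H] [InnerProductSpace ℝ H]
    [NormedAddCommGroup K] [InnerProductSpace ℝ K] (T T' : H →L[ℝ] K)
    (e : ℝ → H) (M : ℝ → ℝ) (hM : M 0 = 1) {c s : ℝ} (hc0 : 0 ≤ c) (hc1 : c ≤ 1) (hs : 0 ≤ s)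
    (hdense : (Submodule.span ℝ (Set.range e)).topologicalClosure = ⊤)
    (he : ∀ t u, inner ℝ (e t) (e u) = M t * M u * Real.exp (s * t * u))
    (hT : ∀ t u, inner ℝ (T (e t)) (T' (e u)) = M t * M u * Real.exp (c * s * t * u)) (F : H) :
    inner ℝ (T F) (T' F) ≤ c * inner ℝ F F + (1 - c) * inner ℝ (e 0) F ^ 2 := by
  have hclosed : IsClosed {F : H |
      inner ℝ (T F) (T' F) ≤ c * inner ℝ F F + (1 - c) * inner ℝ (e 0) F ^ 2} :=
    isClosed_le (by fun_prop) (by fun_prop)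
  have hsub : (Submodule.span ℝ (Set.range e) : Set H) ⊆ {F : H |
      inner ℝ (T F) (T' F) ≤ c * inner ℝ F F + (1 - c) * inner ℝ (e 0) F ^ 2} := by
    intro F hF
    obtain ⟨a, rfl⟩ := (Finsupp.mem_span_range_iff_exists_finsupp).1 hF
    have h0 (u : ℝ) : inner ℝ (e 0) (e u) = M u := by simp [he, hM]
    have key := exp_kernel_nonneg a.support (fun t => a t * M t) id hc0 hc1 hs
    simp only [Set.mem_ofPred_eq, Finsupp.sum, map_sum, map_smul, sum_inner, inner_sum,
      real_inner_smul_left, real_inner_smul_right, h0]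
    simp only [he, hT]
    rw [pow_two, Finset.sum_mul_sum, Finset.mul_sum, Finset.mul_sum, ← Finset.sum_add_distrib,
      ← sub_nonneg, ← Finset.sum_sub_distrib]
    refine key.trans_eq (Finset.sum_congr rfl fun i _ => ?_)
    rw [Finset.mul_sum, Finset.mul_sum, ← Finset.sum_add_distrib, ← Finset.sum_sub_distrib]
    refine Finset.sum_congr rfl fun j _ => ?_
    simp only [id]
    rw [show s * j * i = s * i * j by ring, show c * s * j * i = c * s * i * j by ring]
    ring
  have hF : F ∈ (Submodule.span ℝ (Set.range e)).topologicalClosure := hdense ▸ Submodule.mem_top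
  exact closure_minimal hsub hclosed hF

lemma memLp_exp_gaussianReal (a : ℝ) (s : ℝ≥0) (t : ℝ) :
    MemLp (fun x => Real.exp (t * x)) 2 (gaussianReal a s) := by
  rw [memLp_two_iff_integrable_sq (by fun_prop)]
  refine (integrable_exp_mul_gaussianReal (μ := a) (v := s) (2 * t)).congr (ae_of_all _ fun x => ?_)
  simp only
  rw [← Real.exp_nat_mul]; congr 1; push_cast; ring

lemma ae_eq_zero_of_integral_mul_exp_eq_zero (a : ℝ) (s : ℝ≥0) {g : ℝ → ℝ}
    (hg : MemLp g 2 (gaussianReal a s))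
    (h : ∀ t, ∫ x, g x * Real.exp (t * x) ∂gaussianReal a s = 0) :
    g =ᵐ[gaussianReal a s] 0 := by
  set ν := gaussianReal a s
  have hgi : Integrable g ν := hg.integrable one_le_two
  have hpos : AEMeasurable (fun x => ENNReal.ofReal (g x)) ν := hgi.aemeasurable.ennreal_ofReal
  have hneg : AEMeasurable (fun x => ENNReal.ofReal (-g x)) ν :=
    hgi.aemeasurable.neg.ennreal_ofReal
  set ν₁ := ν.withDensity fun x => ENNReal.ofReal (g x) with hν₁
  set ν₂ := ν.withDensity fun x => ENNReal.ofReal (-g x) with hν₂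
  have hf₁ : IsFiniteMeasure ν₁ := isFiniteMeasure_withDensity_ofReal hgi.2
  have hf₂ : IsFiniteMeasure ν₂ := isFiniteMeasure_withDensity_ofReal hgi.neg.2
  have hint (t : ℝ) : Integrable (fun x => Real.exp (t * x) * g x) ν :=
    (memLp_exp_gaussianReal a s t).integrable_mul hg
  have hi₁ (t : ℝ) : Integrable (fun x => (ENNReal.ofReal (g x)).toReal * Real.exp (t * x)) ν := by
    refine (hint t).mono (hpos.ennreal_toReal.aestronglyMeasurable.mul (by fun_prop)) ?_
    refine ae_of_all _ fun x => ?_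
    rw [norm_mul, norm_mul, mul_comm]
    gcongr
    rw [Real.norm_of_nonneg ENNReal.toReal_nonneg, ENNReal.toReal_ofReal']
    exact max_le (le_abs_self _) (abs_nonneg _)
  have hi₂ (t : ℝ) : Integrable (fun x => (ENNReal.ofReal (-g x)).toReal * Real.exp (t * x)) ν := by
    refine (hint t).mono (hneg.ennreal_toReal.aestronglyMeasurable.mul (by fun_prop)) ?_
    refine ae_of_all _ fun x => ?_
    rw [norm_mul, norm_mul, mul_comm]
    gcongr
    rw [Real.norm_of_nonneg ENNReal.toReal_nonneg, ENNReal.toReal_ofReal']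
    exact max_le (neg_le_abs _) (abs_nonneg _)
  have hmgf : mgf id ν₁ = mgf id ν₂ := by
    ext t
    simp only [mgf, id, hν₁, hν₂]
    rw [integral_withDensity_eq_integral_toReal_smul₀ hpos (by simp),
      integral_withDensity_eq_integral_toReal_smul₀ hneg (by simp), ← sub_eq_zero]
    simp only [smul_eq_mul]
    rw [← integral_sub (hi₁ t) (hi₂ t), ← h t]
    congr with x
    rw [← sub_mul, ENNReal.toReal_ofReal', ENNReal.toReal_ofReal']
    congr 1
    rcases le_total 0 (g x) with h0 | h0
    · simp [h0]
    · simp [h0]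
  have hzero : ν₁ = 0 ↔ ν₂ = 0 := by
    have := congrFun hmgf 0
    simp only [mgf_zero'] at this
    rw [← Measure.measure_univ_eq_zero, ← Measure.measure_univ_eq_zero,
      ← measureReal_eq_zero_iff, this, measureReal_eq_zero_iff]
  have hset : integrableExpSet id ν₁ = Set.univ := by
    ext t
    simp only [integrableExpSet, Set.mem_ofPred_eq, Set.mem_univ, iff_true, id]
    rw [hν₁, integrable_withDensity_iff_integrable_smul₀' hpos (by simp)]
    exact hi₁ t
  have hc : complexMGF id ν₁ = complexMGF id ν₂ := by
    ext z
    exact eqOn_complexMGF_of_mgf' hmgf hzero (by simp [hset])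
  have heq := Measure.ext_of_complexMGF_id_eq hc
  rw [hν₁, hν₂, withDensity_eq_iff hpos hneg hgi.lintegral_lt_top.ne] at heq
  filter_upwards [heq] with x hx
  simp only [Pi.zero_apply]
  rcases lt_trichotomy (g x) 0 with h0 | h0 | h0
  · rw [ENNReal.ofReal_of_nonpos h0.le] at hx
    have := ENNReal.ofReal_eq_zero.1 hx.symm
    linarith
  · exact h0
  · rw [ENNReal.ofReal_of_nonpos (p := -g x) (by linarith)] at hx
    have := ENNReal.ofReal_eq_zero.1 hx
    linarith

lemma topologicalClosure_span_exp_gaussianReal (a : ℝ) (s : ℝ≥0) :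
    (Submodule.span ℝ (Set.range fun t : ℝ =>
      (memLp_exp_gaussianReal a s t).toLp)).topologicalClosure = ⊤ := by
  rw [Submodule.topologicalClosure_eq_top_iff, Submodule.eq_bot_iff]
  intro G hG
  rw [Submodule.mem_orthogonal] at hG
  rw [Lp.eq_zero_iff_ae_eq_zero]
  refine ae_eq_zero_of_integral_mul_exp_eq_zero a s (Lp.memLp G) fun t => ?_
  rw [← hG _ (Submodule.subset_span ⟨t, rfl⟩), L2.inner_def]
  refine integral_congr_ae ?_
  filter_upwards [(memLp_exp_gaussianReal a s t).coeFn_toLp] with x hx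
  simp [hx]

lemma inner_toLp_toLp_eq_integral {α : Type*} [MeasurableSpace α] {P : Measure α} {f g : α → ℝ}
    (hf : MemLp f 2 P) (hg : MemLp g 2 P) :
    inner ℝ (hf.toLp f) (hg.toLp g) = ∫ x, f x * g x ∂P := by
  rw [L2.inner_def]
  refine integral_congr_ae ?_
  filter_upwards [hf.coeFn_toLp, hg.coeFn_toLp] with x hx hy
  simp [hx, hy, mul_comm]

/-- The law of `κ Y + N` for independent `Y ∼ N(m, v)` and `N ∼ N(0, 1)`. -/
lemma map_const_mul_add_gaussianReal {Ω' : Type*} [MeasurableSpace Ω'] {P : Measure Ω'}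
    {Y N : Ω' → ℝ} (hY : Measurable Y) {m : ℝ} {v : ℝ≥0}
    (hYl : P.map Y = gaussianReal m v) (hNl : P.map N = gaussianReal 0 1)
    (hYN : IndepFun Y N P) (κ : ℝ) :
    P.map (fun ω => κ * Y ω + N ω) =
      gaussianReal (κ * m) (NNReal.mk (κ ^ 2) (sq_nonneg κ) * v + 1) := by
  have h1 : P.map (fun ω => κ * Y ω) =
      gaussianReal (κ * m) (NNReal.mk (κ ^ 2) (sq_nonneg κ) * v) := by
    rw [← gaussianReal_map_const_mul, ← hYl, Measure.map_map (by fun_prop) hY]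
    rfl
  have hind : IndepFun (fun ω => κ * Y ω) N P :=
    hYN.comp (φ := fun y => κ * y) (ψ := id) (by fun_prop) measurable_id
  simpa [Pi.add_def] using gaussianReal_add_gaussianReal_of_indepFun hind h1 hNl

/-- The Gaussian channel contracts variances: if `h(y) = E[g(κ y + N)]` and `Y ∼ N(m, v)`, then
`Var h(Y) ≤ κ² v / (κ² v + 1) · Var g(κ Y + N)`. -/
lemma variance_gaussian_channel_le (m κ : ℝ) (v : ℝ≥0) {g : ℝ → ℝ} (hgm : Measurable g)
    (hg : MemLp g 2 (gaussianReal (κ * m) (NNReal.mk (κ ^ 2) (sq_nonneg κ) * v + 1))) :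
    MemLp (fun y => ∫ n, g (κ * y + n) ∂gaussianReal 0 1) 2 (gaussianReal m v) ∧
    Var[fun y => ∫ n, g (κ * y + n) ∂gaussianReal 0 1; gaussianReal m v] ≤
      κ ^ 2 * v / (κ ^ 2 * v + 1) *
        Var[g; gaussianReal (κ * m) (NNReal.mk (κ ^ 2) (sq_nonneg κ) * v + 1)] := by
  set s : ℝ≥0 := NNReal.mk (κ ^ 2) (sq_nonneg κ) * v + 1 with hs
  have hs' : (s : ℝ) = κ ^ 2 * v + 1 := by simp [hs]
  set ν := gaussianReal (κ * m) s with hν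
  set γ₀ := gaussianReal 0 1 with hγ₀
  set μY := gaussianReal m v with hμY
  set P : Measure (ℝ × ℝ × ℝ) := μY.prod (γ₀.prod γ₀) with hP
  set c : ℝ := κ ^ 2 * v / (κ ^ 2 * v + 1) with hc
  have hsq : 0 ≤ κ ^ 2 * (v : ℝ) := by positivity
  have hc0 : 0 ≤ c := by positivity
  have hc1 : c ≤ 1 := by rw [hc, div_le_one (by positivity)]; linarith
  have hcs : c * s = κ ^ 2 * v := by rw [hc, hs']; field_simp
  have hfst : P.map Prod.fst = μY := by simp [hP, Measure.map_fst_prod]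
  have hsnd : P.map Prod.snd = γ₀.prod γ₀ := by simp [hP, Measure.map_snd_prod]
  have hn₁ : P.map (fun p => p.2.1) = γ₀ := by
    rw [show (fun p : ℝ × ℝ × ℝ => p.2.1) = Prod.fst ∘ Prod.snd from rfl,
      ← Measure.map_map measurable_fst measurable_snd, hsnd]
    simp [Measure.map_fst_prod]
  have hn₂ : P.map (fun p => p.2.2) = γ₀ := by
    rw [show (fun p : ℝ × ℝ × ℝ => p.2.2) = Prod.snd ∘ Prod.snd from rfl,
      ← Measure.map_map measurable_snd measurable_snd, hsnd]
    simp [Measure.map_snd_prod]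
  have hind : IndepFun Prod.fst Prod.snd P :=
    indepFun_prod (X := id) (Y := id) measurable_id measurable_id
  have hi₁ : IndepFun Prod.fst (fun p : ℝ × ℝ × ℝ => p.2.1) P :=
    hind.comp measurable_id measurable_fst
  have hi₂ : IndepFun Prod.fst (fun p : ℝ × ℝ × ℝ => p.2.2) P :=
    hind.comp measurable_id measurable_snd
  have hZ₁ : MeasurePreserving (fun p : ℝ × ℝ × ℝ => κ * p.1 + p.2.1) P ν :=
    ⟨by fun_prop, map_const_mul_add_gaussianReal measurable_fst hfst hn₁ hi₁ κ⟩
  have hZ₂ : MeasurePreserving (fun p : ℝ × ℝ × ℝ => κ * p.1 + p.2.2) P ν :=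
    ⟨by fun_prop, map_const_mul_add_gaussianReal measurable_fst hfst hn₂ hi₂ κ⟩
  have hg₁ : MemLp (fun p : ℝ × ℝ × ℝ => g (κ * p.1 + p.2.1)) 2 P := hg.comp_measurePreserving hZ₁
  have hg₂ : MemLp (fun p : ℝ × ℝ × ℝ => g (κ * p.1 + p.2.2)) 2 P := hg.comp_measurePreserving hZ₂
  have hprod : Integrable (fun p : ℝ × ℝ × ℝ => g (κ * p.1 + p.2.1) * g (κ * p.1 + p.2.2)) P :=
    hg₁.integrable_mul hg₂
  have hsq_eq (y : ℝ) : ∫ q : ℝ × ℝ, g (κ * y + q.1) * g (κ * y + q.2) ∂γ₀.prod γ₀ =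
      (∫ n, g (κ * y + n) ∂γ₀) ^ 2 := by
    rw [integral_prod_mul (fun n => g (κ * y + n)) (fun n => g (κ * y + n)), pow_two]
  have hhm : StronglyMeasurable fun y => ∫ n, g (κ * y + n) ∂γ₀ :=
    StronglyMeasurable.integral_prod_right (f := fun y n => g (κ * y + n))
      (hgm.comp (by fun_prop)).stronglyMeasurable
  have hmem : MemLp (fun y => ∫ n, g (κ * y + n) ∂γ₀) 2 μY := by
    rw [memLp_two_iff_integrable_sq hhm.aestronglyMeasurable]
    simpa only [hsq_eq] using hprod.integral_prod_left
  refine ⟨hmem, ?_⟩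
  have hmean : ∫ y, ∫ n, g (κ * y + n) ∂γ₀ ∂μY = ∫ z, g z ∂ν := by
    have hZ : MeasurePreserving (fun p : ℝ × ℝ => κ * p.1 + p.2) (μY.prod γ₀) ν :=
      ⟨by fun_prop, map_const_mul_add_gaussianReal measurable_fst
        (by simp [Measure.map_fst_prod, hμY]) (by simp [Measure.map_snd_prod, hγ₀])
        (indepFun_prod (X := id) (Y := id) measurable_id measurable_id) κ⟩
    rw [← hZ.map_eq, integral_map hZ.measurable.aemeasurable hgm.aestronglyMeasurable,
      integral_prod (fun p : ℝ × ℝ => g (κ * p.1 + p.2))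
        ((hg.comp_measurePreserving hZ).integrable one_le_two)]
  have hsecond : ∫ y, (∫ n, g (κ * y + n) ∂γ₀) ^ 2 ∂μY =
      ∫ p, g (κ * p.1 + p.2.1) * g (κ * p.1 + p.2.2) ∂P := by
    rw [integral_prod _ hprod]
    simp only [hsq_eq]
  let T : Lp ℝ 2 ν →L[ℝ] Lp ℝ 2 P :=
    (Lp.compMeasurePreservingₗᵢ ℝ _ hZ₁).toContinuousLinearMap
  let T' : Lp ℝ 2 ν →L[ℝ] Lp ℝ 2 P :=
    (Lp.compMeasurePreservingₗᵢ ℝ _ hZ₂).toContinuousLinearMap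
  have hTt {f : ℝ → ℝ} (hf : MemLp f 2 ν) :
      T (hf.toLp f) = (hf.comp_measurePreserving hZ₁).toLp _ :=
    Lp.toLp_compMeasurePreserving hf hZ₁
  have hTt' {f : ℝ → ℝ} (hf : MemLp f 2 ν) :
      T' (hf.toLp f) = (hf.comp_measurePreserving hZ₂).toLp _ :=
    Lp.toLp_compMeasurePreserving hf hZ₂
  have hmgf (a : ℝ) (w : ℝ≥0) (t : ℝ) :
      ∫ x, Real.exp (t * x) ∂gaussianReal a w = Real.exp (a * t + w * t ^ 2 / 2) :=
    congrFun mgf_id_gaussianReal t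
  have key := inner_map_le_of_exponential_family T T'
    (fun t => (memLp_exp_gaussianReal (κ * m) s t).toLp)
    (fun t => Real.exp (κ * m * t + s * t ^ 2 / 2)) (by simp) hc0 hc1 s.coe_nonneg
    (topologicalClosure_span_exp_gaussianReal (κ * m) s) ?_ ?_ (hg.toLp g)
  · rw [hTt, hTt', inner_toLp_toLp_eq_integral, inner_toLp_toLp_eq_integral,
      inner_toLp_toLp_eq_integral] at key
    simp only [Function.comp_def, zero_mul, Real.exp_zero, one_mul] at key
    rw [variance_eq_sub hmem, variance_eq_sub hg]
    simp only [Pi.pow_apply, hsecond, hmean]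
    simp only [← pow_two] at key
    linarith
  · intro t u
    rw [inner_toLp_toLp_eq_integral]
    simp only [← Real.exp_add, ← add_mul]
    rw [hmgf]
    congr 1; ring
  · intro t u
    rw [hTt, hTt', inner_toLp_toLp_eq_integral]
    simp only [Function.comp_def]
    have e1 (p : ℝ × ℝ × ℝ) : Real.exp (t * (κ * p.1 + p.2.1)) * Real.exp (u * (κ * p.1 + p.2.2)) =
        Real.exp ((t + u) * κ * p.1) * (Real.exp (t * p.2.1) * Real.exp (u * p.2.2)) := by
      simp only [← Real.exp_add]; congr 1; ring
    simp only [e1]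
    rw [hP, integral_prod_mul (fun y => Real.exp ((t + u) * κ * y))
      (fun q : ℝ × ℝ => Real.exp (t * q.1) * Real.exp (u * q.2)),
      integral_prod_mul (fun n => Real.exp (t * n)) (fun n => Real.exp (u * n)), hmgf, hmgf, hmgf,
      hcs, hs']
    simp only [← Real.exp_add]
    congr 1; push_cast; ring

lemma MemS.memLp {μ : Measure Ω} [IsFiniteMeasure μ] {U : Ω → ℝ} {f : ℝ → ℝ} (hf : MemS μ U f)
    (hU : Measurable U) : MemLp (f ∘ U) 2 μ :=
  (evariance_lt_top_iff_memLp (hf.1.comp hU).aestronglyMeasurable).1 hf.2.2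

lemma MemS.variance_pos {μ : Measure Ω} {U : Ω → ℝ} {f : ℝ → ℝ} (hf : MemS μ U f) :
    0 < Var[f ∘ U; μ] :=
  ENNReal.toReal_pos hf.2.1.ne' hf.2.2.ne

lemma memS_of_variance_pos {μ : Measure Ω} {U : Ω → ℝ} {f : ℝ → ℝ} (hf : Measurable f)
    (h : 0 < Var[f ∘ U; μ]) : MemS μ U f :=
  ⟨hf, (ENNReal.toReal_pos_iff.1 h).1, (ENNReal.toReal_pos_iff.1 h).2⟩

lemma MemS.neg {μ : Measure Ω} {U : Ω → ℝ} {f : ℝ → ℝ} (hf : MemS μ U f) :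
    MemS μ U (fun x => -f x) :=
  memS_of_variance_pos hf.1.neg
    (hf.variance_pos.trans_eq (variance_fun_neg (X := f ∘ U) (μ := μ)).symm)

/-- The Cauchy–Schwarz inequality for covariances. -/
lemma covariance_le_sqrt_mul_sqrt {μ : Measure Ω} [IsProbabilityMeasure μ] {U V : Ω → ℝ}
    (hU : MemLp U 2 μ) (hV : MemLp V 2 μ) (hU0 : 0 < Var[U; μ]) (hV0 : 0 < Var[V; μ]) :
    cov[U, V; μ] ≤ √Var[U; μ] * √Var[V; μ] := by
  have h := variance_nonneg (√Var[V; μ] • U - √Var[U; μ] • V) μ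
  rw [variance_sub (hU.const_smul _) (hV.const_smul _), variance_smul, variance_smul,
    covariance_smul_left, covariance_smul_right, Real.sq_sqrt hU0.le, Real.sq_sqrt hV0.le] at h
  have h1 := Real.sqrt_pos.2 hU0
  have h2 := Real.sqrt_pos.2 hV0
  have h3 := Real.sq_sqrt hU0.le
  have h4 := Real.sq_sqrt hV0.le
  have h5 : 0 < √Var[U; μ] * √Var[V; μ] := mul_pos h1 h2
  have h6 : Var[U; μ] * Var[V; μ] = (√Var[U; μ] * √Var[V; μ]) ^ 2 := by rw [mul_pow, h3, h4]
  nlinarith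

lemma corr_neg_left (μ : Measure Ω) (U V : Ω → ℝ) :
    corr μ (fun ω => -U ω) V = -corr μ U V := by
  have h : corr μ (fun ω => -U ω) V =
      cov[fun ω => -U ω, V; μ] / (√Var[fun ω => -U ω; μ] * √Var[V; μ]) := rfl
  rw [h, covariance_fun_neg_left, variance_fun_neg, neg_div]
  rfl

lemma bddAbove_corr {μ : Measure Ω} [IsProbabilityMeasure μ] {U V : Ω → ℝ}
    (hU : Measurable U) (hV : Measurable V) :
    BddAbove {c | ∃ f g : ℝ → ℝ, MemS μ U f ∧ MemS μ V g ∧ c = corr μ (f ∘ U) (g ∘ V)} := by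
  refine ⟨1, ?_⟩
  rintro _ ⟨f, g, hf, hg, rfl⟩
  have h1 := Real.sqrt_pos.2 hf.variance_pos
  have h2 := Real.sqrt_pos.2 hg.variance_pos
  exact (div_le_one (by positivity)).2
    (covariance_le_sqrt_mul_sqrt (hf.memLp hU) (hg.memLp hV) hf.variance_pos hg.variance_pos)

lemma abs_corr_le_maxCorr {μ : Measure Ω} [IsProbabilityMeasure μ] {U V : Ω → ℝ}
    (hU : Measurable U) (hV : Measurable V) {f g : ℝ → ℝ} (hf : MemS μ U f) (hg : MemS μ V g) :
    |corr μ (f ∘ U) (g ∘ V)| ≤ maxCorr μ U V := by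
  refine abs_le'.2 ⟨le_csSup (bddAbove_corr hU hV) ⟨f, g, hf, hg, rfl⟩,
    le_csSup (bddAbove_corr hU hV) ⟨fun x => -f x, g, hf.neg, hg, ?_⟩⟩
  exact (corr_neg_left μ (f ∘ U) (g ∘ V)).symm

lemma maxCorr_nonneg {μ : Measure Ω} [IsProbabilityMeasure μ] {U V : Ω → ℝ}
    (hU : Measurable U) (hV : Measurable V) : 0 ≤ maxCorr μ U V := by
  by_cases h : ∃ f g : ℝ → ℝ, MemS μ U f ∧ MemS μ V g
  · obtain ⟨f, g, hf, hg⟩ := h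
    exact (abs_nonneg _).trans (abs_corr_le_maxCorr hU hV hf hg)
  · refine (Real.sSup_nonneg ?_)
    rintro _ ⟨f, g, hf, hg, rfl⟩
    exact absurd ⟨f, g, hf, hg⟩ h

/-- Averaging out independent noise: `Cov(f(X), g(κ Y + N)) = Cov(f(X), h(Y))` with
`h(y) = E[g(κ y + N)]`. -/
lemma covariance_comp_add_indep {μ : Measure Ω} [IsProbabilityMeasure μ] {X Y N : Ω → ℝ}
    (hX : Measurable X) (hY : Measurable Y) (hN : Measurable N)
    (hindep : IndepFun (fun ω => (X ω, Y ω)) N μ) (κ : ℝ) {f g : ℝ → ℝ}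
    (hf : Measurable f) (hg : Measurable g) (hfX : MemLp (fun ω => f (X ω)) 2 μ)
    (hgZ : MemLp (fun ω => g (κ * Y ω + N ω)) 2 μ)
    (hhY : MemLp (fun ω => ∫ n, g (κ * Y ω + n) ∂μ.map N) 2 μ) :
    cov[fun ω => f (X ω), fun ω => g (κ * Y ω + N ω); μ] =
      cov[fun ω => f (X ω), fun ω => ∫ n, g (κ * Y ω + n) ∂μ.map N; μ] := by
  have := Measure.isProbabilityMeasure_map (μ := μ) hN.aemeasurable
  have hXY : Measurable fun ω => (X ω, Y ω) := hX.prodMk hY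
  have hmap := hindep.map_prod_eq_prod_map_map hXY.aemeasurable hN.aemeasurable
  have key (φ : ℝ → ℝ) (hφ : Measurable φ)
      (hint : Integrable (fun ω => φ (X ω) * g (κ * Y ω + N ω)) μ) :
      ∫ ω, φ (X ω) * g (κ * Y ω + N ω) ∂μ =
        ∫ ω, φ (X ω) * ∫ n, g (κ * Y ω + n) ∂μ.map N ∂μ := by
    have hm : Measurable fun q : (ℝ × ℝ) × ℝ => φ q.1.1 * g (κ * q.1.2 + q.2) := by fun_prop
    have hpair : Measurable fun ω => ((X ω, Y ω), N ω) := hXY.prodMk hN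
    have hint' : Integrable (fun q : (ℝ × ℝ) × ℝ => φ q.1.1 * g (κ * q.1.2 + q.2))
        ((μ.map fun ω => (X ω, Y ω)).prod (μ.map N)) := by
      rw [← hmap, integrable_map_measure hm.aestronglyMeasurable hpair.aemeasurable]
      exact hint
    have hhm : StronglyMeasurable fun y => ∫ n, g (κ * y + n) ∂μ.map N :=
      StronglyMeasurable.integral_prod_right (f := fun y n => g (κ * y + n))
        (hg.comp (by fun_prop)).stronglyMeasurable
    have hhm' := hhm.measurable
    calc ∫ ω, φ (X ω) * g (κ * Y ω + N ω) ∂μ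
        = ∫ q, φ q.1.1 * g (κ * q.1.2 + q.2) ∂(μ.map fun ω => (X ω, Y ω)).prod (μ.map N) := by
          rw [← hmap, integral_map hpair.aemeasurable hm.aestronglyMeasurable]
      _ = ∫ p, φ p.1 * ∫ n, g (κ * p.2 + n) ∂μ.map N ∂μ.map fun ω => (X ω, Y ω) := by
          rw [integral_prod _ hint']
          simp only [integral_const_mul]
      _ = _ := by
          rw [integral_map hXY.aemeasurable]
          exact ((hφ.comp measurable_fst).mul (hhm'.comp measurable_snd)).aestronglyMeasurable
  rw [covariance_eq_sub hfX hgZ, covariance_eq_sub hfX hhY]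
  have h1 := key f hf (hfX.integrable_mul hgZ)
  have h2 := key (fun _ => 1) measurable_const (by simpa using hgZ.integrable one_le_two)
  simp only [one_mul] at h2
  simp only [Pi.mul_apply, h1, h2]

/-- Data processing for the maximal correlation through the Gaussian channel. -/
lemma maxCorr_gaussian_channel_le {μ : Measure Ω} [IsProbabilityMeasure μ] {X Y N : Ω → ℝ}
    (hX : Measurable X) (hY : Measurable Y) (hN : Measurable N) {m : ℝ} {v : ℝ≥0}
    (hYl : μ.map Y = gaussianReal m v) (hNl : μ.map N = gaussianReal 0 1)
    (hindep : IndepFun (fun ω => (X ω, Y ω)) N μ) (κ : ℝ) :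
    maxCorr μ X (fun ω => κ * Y ω + N ω) ≤
      maxCorr μ X Y * √(κ ^ 2 * v / (κ ^ 2 * v + 1)) := by
  have hYN : IndepFun Y N μ := hindep.comp measurable_snd measurable_id
  have hZm : Measurable fun ω => κ * Y ω + N ω := by fun_prop
  have hZl := map_const_mul_add_gaussianReal hY hYl hNl hYN κ
  refine Real.sSup_le ?_ (mul_nonneg (maxCorr_nonneg hX hY) (Real.sqrt_nonneg _))
  rintro _ ⟨f, g, hf, hg, rfl⟩
  set h : ℝ → ℝ := fun y => ∫ n, g (κ * y + n) ∂gaussianReal 0 1 with hh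
  have hhm : Measurable h :=
    (StronglyMeasurable.integral_prod_right (f := fun y n => g (κ * y + n))
      (hg.1.comp (by fun_prop)).stronglyMeasurable).measurable
  have hfX := hf.memLp hX
  have hgZ := hg.memLp hZm
  have hgν : MemLp g 2 (gaussianReal (κ * m) (NNReal.mk (κ ^ 2) (sq_nonneg κ) * v + 1)) := by
    rw [← hZl, memLp_map_measure_iff hg.1.aestronglyMeasurable hZm.aemeasurable]
    exact hgZ
  obtain ⟨hmem, hvar⟩ := variance_gaussian_channel_le m κ v hg.1 hgν
  have hhY : MemLp (h ∘ Y) 2 μ := by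
    rwa [← hYl, memLp_map_measure_iff hhm.aestronglyMeasurable hY.aemeasurable] at hmem
  rw [← hYl, ← hZl, variance_map hg.1.aemeasurable hZm.aemeasurable,
    variance_map hhm.aemeasurable hY.aemeasurable] at hvar
  have hcov : cov[f ∘ X, g ∘ (fun ω => κ * Y ω + N ω); μ] = cov[f ∘ X, h ∘ Y; μ] := by
    have := covariance_comp_add_indep hX hY hN hindep κ hf.1 hg.1 hfX hgZ
      (by rw [hNl]; exact hhY)
    rw [hNl] at this
    exact this
  have hsf := Real.sqrt_pos.2 hf.variance_pos
  have hsg := Real.sqrt_pos.2 hg.variance_pos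
  have hsh : √Var[h ∘ Y; μ] ≤ √(κ ^ 2 * v / (κ ^ 2 * v + 1)) *
      √Var[g ∘ (fun ω => κ * Y ω + N ω); μ] := by
    rw [← Real.sqrt_mul (by positivity)]
    exact Real.sqrt_le_sqrt hvar
  have hbound : cov[f ∘ X, h ∘ Y; μ] ≤
      maxCorr μ X Y * (√Var[f ∘ X; μ] * √Var[h ∘ Y; μ]) := by
    rcases (variance_nonneg (h ∘ Y) μ).eq_or_lt with h0 | h0
    · have hconst := ae_eq_integral_of_variance_eq_zero hhY h0.symm
      have : cov[f ∘ X, h ∘ Y; μ] = 0 := by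
        rw [covariance]
        refine integral_eq_zero_of_ae ?_
        filter_upwards [hconst] with ω hω
        rw [hω, sub_self, mul_zero]
        rfl
      rw [this, ← h0]
      simp
    · have h1 := (le_abs_self _).trans
        (abs_corr_le_maxCorr hX hY hf (memS_of_variance_pos hhm h0))
      exact (div_le_iff₀ (mul_pos hsf (Real.sqrt_pos.2 h0))).1 h1
  change cov[f ∘ X, g ∘ (fun ω => κ * Y ω + N ω); μ] / _ ≤ _
  rw [div_le_iff₀ (mul_pos hsf hsg), hcov]
  refine hbound.trans ?_
  have := mul_le_mul_of_nonneg_left hsh (mul_nonneg (maxCorr_nonneg (μ := μ) hX hY) hsf.le)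
  linarith

/-- For Gaussian `Y`, the estimation error of `Y` from `κ Y + N` is `Var(Y) / (κ² Var(Y) + 1)`. -/
lemma mmse_gaussian_channel {μ : Measure Ω} [IsProbabilityMeasure μ] {Y N : Ω → ℝ}
    (hY : Measurable Y) (hN : Measurable N) {m : ℝ} {v : ℝ≥0}
    (hYl : μ.map Y = gaussianReal m v) (hNl : μ.map N = gaussianReal 0 1)
    (hYN : IndepFun Y N μ) (κ : ℝ) :
    mmse μ Y (fun ω => κ * Y ω + N ω) = v / (κ ^ 2 * v + 1) := by
  have hYg : HasGaussianLaw Y μ := ⟨by rw [hYl]; infer_instance⟩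
  have hNg : HasGaussianLaw N μ := ⟨by rw [hNl]; infer_instance⟩
  have hY2 : MemLp Y 2 μ := hYg.memLp_two
  have hN2 : MemLp N 2 μ := hNg.memLp_two
  have hVY : Var[Y; μ] = v := by
    rw [← variance_id_map hY.aemeasurable, hYl, variance_id_gaussianReal]
  have hVN : Var[N; μ] = 1 := by
    rw [← variance_id_map hN.aemeasurable, hNl, variance_id_gaussianReal]; rfl
  have hcYN : cov[Y, N; μ] = 0 := hYN.covariance_eq_zero hY2 hN2
  have hpos : 0 < κ ^ 2 * (v : ℝ) + 1 := by positivity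
  set c : ℝ := κ * v / (κ ^ 2 * v + 1) with hc
  set Z : Ω → ℝ := fun ω => κ * Y ω + N ω with hZ
  set W : Ω → ℝ := fun ω => Y ω - c * Z ω with hW
  have hZm : Measurable Z := by fun_prop
  have hWm : Measurable W := by fun_prop
  have hZ2 : MemLp Z 2 μ := (hY2.const_mul κ).add hN2
  have hW2 : MemLp W 2 μ := hY2.sub (hZ2.const_mul c)
  have hZ' : Z = κ • Y + N := rfl
  have hW' : W = Y - c • Z := rfl
  have hVZ : Var[Z; μ] = κ ^ 2 * v + 1 := by
    rw [hZ', variance_add (hY2.const_smul κ) hN2, variance_smul, covariance_smul_left, hVY, hVN,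
      hcYN]; ring
  have hcYZ : cov[Y, Z; μ] = κ * v := by
    rw [hZ', covariance_add_right hY2 (hY2.const_smul κ) hN2, covariance_smul_right,
      covariance_self hY.aemeasurable, hVY, hcYN, add_zero]
  have hcWZ : cov[W, Z; μ] = 0 := by
    rw [hW', covariance_sub_left hY2 (hZ2.const_smul c) hZ2, covariance_smul_left,
      covariance_self hZm.aemeasurable, hVZ, hcYZ, hc]
    field_simp
    ring
  have hVW : Var[W; μ] = v / (κ ^ 2 * v + 1) := by
    rw [hW', variance_sub hY2 (hZ2.const_smul c), variance_smul, covariance_smul_right, hVY, hVZ,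
      hcYZ, hc]
    field_simp
    ring
  have hjoint : HasGaussianLaw (fun ω => (W ω, Z ω)) μ := by
    let L : ℝ × ℝ →L[ℝ] ℝ × ℝ :=
      ((ContinuousLinearMap.fst ℝ ℝ ℝ) -
        c • (κ • ContinuousLinearMap.fst ℝ ℝ ℝ + ContinuousLinearMap.snd ℝ ℝ ℝ)).prod
        (κ • ContinuousLinearMap.fst ℝ ℝ ℝ + ContinuousLinearMap.snd ℝ ℝ ℝ)
    exact (hYN.hasGaussianLaw hYg hNg).map L
  have hWZ : IndepFun W Z μ := hjoint.indepFun_of_covariance_eq_zero hcWZ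
  have hle : MeasurableSpace.comap Z Real.measurableSpace ≤ _ := hZm.comap_le
  have hce : μ[Y | MeasurableSpace.comap Z Real.measurableSpace] =ᵐ[μ]
      fun ω => c * Z ω + μ[W] := by
    have hYdec : Y = (fun ω => c * Z ω) + W := by ext ω; simp [hW]
    have h1 : μ[fun ω => c * Z ω | MeasurableSpace.comap Z Real.measurableSpace]
        = fun ω => c * Z ω :=
      condExp_of_stronglyMeasurable hle
        ((comap_measurable Z).const_mul c).stronglyMeasurable
        ((hZ2.const_mul c).integrable one_le_two)
    have h2 : μ[W | MeasurableSpace.comap Z Real.measurableSpace] =ᵐ[μ] fun _ => μ[W] :=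
      condExp_indep_eq hWm.comap_le hle (comap_measurable W).stronglyMeasurable hWZ
    have h3 := condExp_add ((hZ2.const_mul c).integrable one_le_two) (hW2.integrable one_le_two)
      (MeasurableSpace.comap Z Real.measurableSpace)
    rw [← hYdec, h1] at h3
    filter_upwards [h3, h2] with ω h3 h2
    rw [h3, Pi.add_apply, h2]
  rw [mmse, ← hVW, variance_eq_integral hWm.aemeasurable]
  refine integral_congr_ae ?_
  filter_upwards [hce] with ω hω
  rw [hω]
  simp only [hW]
  ring

lemma variance_const_mul_add_of_indep {μ : Measure Ω} [IsProbabilityMeasure μ] {Y N : Ω → ℝ}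
    (hY2 : MemLp Y 2 μ) (hN2 : MemLp N 2 μ) (hYN : IndepFun Y N μ) (hVN : Var[N; μ] = 1) (κ : ℝ) :
    Var[fun ω => κ * Y ω + N ω; μ] = κ ^ 2 * Var[Y; μ] + 1 := by
  change Var[κ • Y + N; μ] = _
  rw [variance_add (hY2.const_smul κ) hN2, variance_smul, covariance_smul_left, hVN,
    hYN.covariance_eq_zero hY2 hN2]
  ring

/-- Adding independent noise to a Gaussian `Y` attenuates the squared correlation. -/
lemma corr_gaussian_channel_sq {μ : Measure Ω} [IsProbabilityMeasure μ] {X Y N : Ω → ℝ}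
    (hX2 : MemLp X 2 μ) (hY2 : MemLp Y 2 μ) (hN2 : MemLp N 2 μ)
    (hXN : IndepFun X N μ) (hYN : IndepFun Y N μ) (hVX : 0 < Var[X; μ]) (hVY : 0 < Var[Y; μ])
    (hVN : Var[N; μ] = 1) (κ : ℝ) :
    corr μ X (fun ω => κ * Y ω + N ω) ^ 2 =
      κ ^ 2 * Var[Y; μ] / (κ ^ 2 * Var[Y; μ] + 1) * corr μ X Y ^ 2 := by
  have hVZ := variance_const_mul_add_of_indep hY2 hN2 hYN hVN κ
  have hcXZ : cov[X, fun ω => κ * Y ω + N ω; μ] = κ * cov[X, Y; μ] := by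
    change cov[X, κ • Y + N; μ] = _
    rw [covariance_add_right hX2 (hY2.const_smul κ) hN2, covariance_smul_right,
      hXN.covariance_eq_zero hX2 hN2, add_zero]
  change (cov[X, fun ω => κ * Y ω + N ω; μ] / (√Var[X; μ] * √Var[fun ω => κ * Y ω + N ω; μ])) ^ 2
    = _ * (cov[X, Y; μ] / (√Var[X; μ] * √Var[Y; μ])) ^ 2
  rw [hcXZ, hVZ, div_pow, div_pow, mul_pow, mul_pow, mul_pow, Real.sq_sqrt hVX.le,
    Real.sq_sqrt hVY.le, Real.sq_sqrt (by positivity)]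
  field_simp

/-- Theorem 7: for arbitrary `X` and Gaussian `Y` (with positive
variance, `ρ(X,Y) ≠ 0`, `N` a standard Gaussian independent of `(X,Y)`),
`1 − ε/ρ(X,Y)² ≤ sENSR(ε) ≤ 1 − ε/ρ_m(X,Y)²` for all `ε ∈ [0, ρ_m(X,Y)²]`. -/
theorem sENSR_bounds_gaussian_Y (μ : Measure Ω) [IsProbabilityMeasure μ]
    (X Y N : Ω → ℝ) (hX : Measurable X) (hY : Measurable Y) (hN : Measurable N)
    (hVarX : 0 < evariance X μ ∧ evariance X μ < ⊤)
    (hYgauss : ∃ (m : ℝ) (v : NNReal), 0 < v ∧ μ.map Y = gaussianReal m v)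
    (hρ : corr μ X Y ≠ 0)
    (hNstd : μ.map N = gaussianReal 0 1)
    (hindep : IndepFun (fun ω => (X ω, Y ω)) N μ) :
    ∀ ε ∈ Set.Icc (0 : ℝ) (maxCorr μ X Y ^ 2),
      1 - ε / corr μ X Y ^ 2 ≤ sENSR μ X Y N ε ∧
      sENSR μ X Y N ε ≤ 1 - ε / maxCorr μ X Y ^ 2 := by
  obtain ⟨m, v, hv, hYl⟩ := hYgauss
  rintro ε ⟨hε0, hε⟩
  have hv' : (0 : ℝ) < v := hv
  have hXN : IndepFun X N μ := hindep.comp measurable_fst measurable_id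
  have hYN : IndepFun Y N μ := hindep.comp measurable_snd measurable_id
  have hYg : HasGaussianLaw Y μ := ⟨by rw [hYl]; infer_instance⟩
  have hNg : HasGaussianLaw N μ := ⟨by rw [hNstd]; infer_instance⟩
  have hX2 : MemLp X 2 μ := (evariance_lt_top_iff_memLp hX.aestronglyMeasurable).1 hVarX.2
  have hVX : 0 < Var[X; μ] := ENNReal.toReal_pos hVarX.1.ne' hVarX.2.ne
  have hVY : Var[Y; μ] = v := by
    rw [← variance_id_map hY.aemeasurable, hYl, variance_id_gaussianReal]
  have hVN : Var[N; μ] = 1 := by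
    rw [← variance_id_map hN.aemeasurable, hNstd, variance_id_gaussianReal, NNReal.coe_one]
  have hSX : MemS μ X id := ⟨measurable_id, hVarX⟩
  have hSY : MemS μ Y id := memS_of_variance_pos measurable_id (hv'.trans_eq hVY.symm)
  have hcorr : 0 < corr μ X Y ^ 2 := by positivity
  have hρm : 0 < maxCorr μ X Y :=
    (abs_pos.2 hρ).trans_le (abs_corr_le_maxCorr hX hY hSX hSY)
  have hZm (γ : ℝ) : Measurable (Zgamma Y N γ) := (hY.const_mul _).add hN
  have hmmse {γ : ℝ} (hγ : 0 ≤ γ) :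
      mmse μ Y (Zgamma Y N γ) / Var[Y; μ] = 1 / (γ * v + 1) := by
    have h := mmse_gaussian_channel hY hN hYl hNstd hYN √γ
    rw [Real.sq_sqrt hγ] at h
    rw [hVY, show mmse μ Y (Zgamma Y N γ) = _ from h]
    field_simp
  have hupper {γ : ℝ} (hγ : 0 ≤ γ) :
      maxCorr μ X (Zgamma Y N γ) ^ 2 ≤ maxCorr μ X Y ^ 2 * (γ * v / (γ * v + 1)) := by
    have h : maxCorr μ X (Zgamma Y N γ) ≤ _ :=
      maxCorr_gaussian_channel_le hX hY hN hYl hNstd hindep √γ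
    rw [Real.sq_sqrt hγ] at h
    refine (pow_le_pow_left₀ (maxCorr_nonneg hX (hZm γ)) h 2).trans_eq ?_
    rw [mul_pow, Real.sq_sqrt (by positivity)]
  have hlower {γ : ℝ} (hγ : 0 ≤ γ) :
      γ * v / (γ * v + 1) * corr μ X Y ^ 2 ≤ maxCorr μ X (Zgamma Y N γ) ^ 2 := by
    have h := corr_gaussian_channel_sq hX2 hYg.memLp_two hNg.memLp_two hXN hYN hVX
      (hv'.trans_eq hVY.symm) hVN √γ
    have hVZ : 0 < Var[id ∘ Zgamma Y N γ; μ] := by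
      refine lt_of_lt_of_eq ?_
        (variance_const_mul_add_of_indep hYg.memLp_two hNg.memLp_two hYN hVN √γ).symm
      rw [hVY]
      positivity
    rw [Real.sq_sqrt hγ, hVY] at h
    rw [← h, ← sq_abs (corr _ _ _)]
    exact pow_le_pow_left₀ (abs_nonneg _)
      (abs_corr_le_maxCorr hX (hZm γ) hSX (memS_of_variance_pos measurable_id hVZ)) 2
  have hle {γ : ℝ} (hγ : 0 ≤ γ) (h : maxCorr μ X (Zgamma Y N γ) ^ 2 ≤ ε) :
      sENSR μ X Y N ε ≤ 1 / (γ * v + 1) := by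
    refine csInf_le ⟨0, ?_⟩ ⟨γ, hγ, h, (hmmse hγ).symm⟩
    rintro _ ⟨δ, hδ, -, rfl⟩
    rw [hmmse hδ]
    positivity
  constructor
  · refine le_csInf ⟨_, 0, le_rfl, (hupper le_rfl).trans (by simpa using hε0), rfl⟩ ?_
    rintro _ ⟨γ, hγ, h, rfl⟩
    have h1 : γ * v / (γ * v + 1) ≤ ε / corr μ X Y ^ 2 :=
      (le_div_iff₀ hcorr).2 ((hlower hγ).trans h)
    have h2 : 1 / (γ * v + 1) = 1 - γ * v / (γ * v + 1) := by
      have : γ * v + 1 ≠ 0 := by positivity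
      field_simp
      ring
    rw [hmmse hγ, h2]
    linarith
  · rcases hε.eq_or_lt with rfl | hlt
    · rw [div_self (by positivity), sub_self]
      refine le_of_forall_pos_le_add fun δ hδ => ?_
      have hγ : 0 ≤ 1 / (δ * v) := by positivity
      refine (hle hγ ((hupper hγ).trans ?_)).trans ?_
      · exact mul_le_of_le_one_right (by positivity) (div_le_one_of_le₀ (by simp) (by positivity))
      · rw [zero_add, div_le_iff₀ (by positivity)]
        have : δ * (1 / (δ * v) * v + 1) = 1 + δ := by field_simp
        linarith
    · set t := ε / maxCorr μ X Y ^ 2 with ht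
      have ht0 : 0 ≤ t := by positivity
      have ht1 : 0 < 1 - t := sub_pos.2 ((div_lt_one (by positivity)).2 hlt)
      have hγ : 0 ≤ t / ((1 - t) * v) := by positivity
      have hγv : t / ((1 - t) * v) * v + 1 = 1 / (1 - t) := by
        field_simp
        ring
      refine (hle hγ ((hupper hγ).trans_eq ?_)).trans_eq ?_
      · have : t / ((1 - t) * v) * v = t / (1 - t) := by field_simp
        rw [hγv, this, div_div_div_cancel_right₀ ht1.ne', div_one, ht]
        field_simp
      · rw [hγv, one_div_one_div]
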